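/- Let Ω be a finite set with |Ω| = n and let 0 ≤ r1, r2 ≤ n. Then for every x' ∈ X_{r1} and x ∈ X_{r2}: (−1)^{|x ∩ x'|} = Σ_{s=0}^{N(r1,r2)} κ_s^{r1,r2} · λ_s^{r1,r2}(|x \ x'|; n), where N(r1,r2) = min(r1, n−r1, r2, n−r2) and κ_s^{r1,r2} = (−2)^s · [n−r1]_s · [r2]_s · P_{r1−s}(r2−s; n−2s) / (s! · [n−s+1]_s · binom(n−2s, r1−s)). Equivalently, the block of the Fourier transform F_X from functions on X_{r1} to functions on X_{r2} equals Σ_{s=0}^{N(r1,r2)} κ_s^{r1,r2} Λ_s^{r1,r2}, which is the kernel form of the decomposition F_X = Σ_{r1,r2} Σ_s k_s^{r1,r2} Λ̃_s^{r1,r2} with k_s^{r1,r2} = (−2)^s √(binom(n−2s,r2−s)/binom(n−2s,r1−s)) P_{r1−s}(r2−s; n−2s). -/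

import Mathlib

/-- Falling factorial `z(z-1)⋯(z-k+1)` for complex `z`. -/
noncomputable def cfall (z : ℂ) (k : ℕ) : ℂ := ∏ i ∈ Finset.range k, (z - i)

/-- Generalized binomial coefficient `binom(t, j)` for complex `t`. -/
noncomputable def cbinom (t : ℂ) (j : ℕ) : ℂ := cfall t j / (Nat.factorial j)

/-- The Hahn kernel `λ_s^{r1,r2}(t; n)`. -/
noncomputable def hahn (n r1 r2 s : ℕ) (t : ℂ) : ℂ :=
  ∑ j ∈ Finset.range (s + 1),
    (-1 : ℂ) ^ j * cbinom t j * cfall (s : ℂ) j * cfall ((n : ℂ) - s + 1) j /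
      (cfall ((n : ℂ) - r1) j * cfall (r2 : ℂ) j)

/-- The operator `Λ_s^{r1,r2} : (X_{r1} → ℂ) → (X_{r2} → ℂ)` with kernel
`λ_s^{r1,r2}(|x2 \ x1|; n)`. -/
noncomputable def Lam (Ω : Type*) [Fintype Ω] [DecidableEq Ω] (n r1 r2 s : ℕ)
    (ψ : {x : Finset Ω // x.card = r1} → ℂ) : {x : Finset Ω // x.card = r2} → ℂ :=
  fun x2 => ∑ x1 : {x : Finset Ω // x.card = r1},
    hahn n r1 r2 s ((((x2 : Finset Ω) \ (x1 : Finset Ω)).card : ℕ) : ℂ) * ψ x1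

/-- The Krawtchouk polynomial `P_m(k; N) = Σ_{j=0}^m (-1)^j binom(k,j) binom(N-k, m-j)`. -/
noncomputable def kraw (m k N : ℕ) : ℂ :=
  ∑ j ∈ Finset.range (m + 1), (-1 : ℂ) ^ j * (k.choose j : ℂ) * ((N - k).choose (m - j) : ℂ)

/-- The coefficient `κ_s^{r1,r2}` of the Fourier transform in the (unnormalized) basis
`Λ_s^{r1,r2}`. -/
noncomputable def kapCoef (n r1 r2 s : ℕ) : ℂ :=
  (-2 : ℂ) ^ s * cfall ((n : ℂ) - r1) s * cfall (r2 : ℂ) s *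
      kraw (r1 - s) (r2 - s) (n - 2 * s) /
    ((s.factorial : ℂ) * cfall ((n : ℂ) - s + 1) s * ((n - 2 * s).choose (r1 - s) : ℂ))


open Finset in
lemma cfall_zero' (z : ℂ) : cfall z 0 = 1 := by simp [cfall]

lemma cfall_succ' (z : ℂ) (k : ℕ) : cfall z (k+1) = cfall z k * (z - k) := by
  simp [cfall, Finset.prod_range_succ]

lemma cfall_add' (z : ℂ) (j k : ℕ) : cfall z (j+k) = cfall z j * cfall (z - j) k := by
  simp only [cfall, Finset.prod_range_add]
  congr 1
  apply Finset.prod_congr rfl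
  intro i _
  push_cast; ring

lemma cfall_succ_left (z : ℂ) (k : ℕ) : cfall z (k+1) = z * cfall (z - 1) k := by
  rw [add_comm, cfall_add']
  simp [cfall]

lemma cfall_nat (m k : ℕ) : cfall (m : ℂ) k = (k.factorial : ℂ) * (m.choose k : ℂ) := by
  induction k with
  | zero => simp [cfall]
  | succ k ih =>
    rw [cfall_succ', ih, Nat.factorial_succ]
    have h := Nat.choose_succ_right_eq m k
    rcases le_or_gt k m with hk | hk
    · have h' : (m.choose (k+1) : ℂ) * (k+1) = m.choose k * (m - k) := by
        have := congrArg (Nat.cast : ℕ → ℂ) h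
        push_cast [Nat.cast_sub hk] at this
        exact this
      push_cast
      linear_combination (-(k.factorial : ℂ)) * h'
    · rw [Nat.choose_eq_zero_of_lt hk, Nat.choose_eq_zero_of_lt (by omega)]; simp

lemma cfall_nat_zero {m k : ℕ} (h : m < k) : cfall (m : ℂ) k = 0 := by
  rw [cfall_nat, Nat.choose_eq_zero_of_lt h]; simp

lemma cfall_nat_ne {m k : ℕ} (h : k ≤ m) : cfall (m : ℂ) k ≠ 0 := by
  rw [cfall_nat]
  have h3 : k.factorial * m.choose k ≠ 0 :=
    Nat.mul_ne_zero (Nat.factorial_ne_zero k) (Nat.choose_pos h).ne'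
  exact_mod_cast h3

lemma cfall_ne_of_le {z : ℂ} {j k : ℕ} (h : j ≤ k) (hz : cfall z k ≠ 0) : cfall z j ≠ 0 := by
  obtain ⟨l, rfl⟩ := Nat.exists_eq_add_of_le h
  rw [cfall_add'] at hz
  exact left_ne_zero_of_mul hz

lemma choose_succ_c (d m : ℕ) : (d.choose (m+1) : ℂ) * (m+1) = d.choose m * (d - m) := by
  have h := cfall_succ' d m
  rw [cfall_nat, cfall_nat, Nat.factorial_succ] at h
  have h0 : (m.factorial : ℂ) ≠ 0 := by exact_mod_cast Nat.factorial_ne_zero m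
  apply mul_left_cancel₀ h0
  push_cast at h
  linear_combination h

/-- Telescoping step for Pfaff--Saalschuetz. -/
lemma ps_step (d s : ℕ) (a b M : ℂ) (hM : M = a + b - d - s + 1)
    (m : ℕ) (hm : m ≤ d) (ha : cfall a d ≠ 0) (hb : cfall b d ≠ 0) :
    ∑ k ∈ Finset.range (m+1),
      ((a-s)*(b-s)*((-1)^k * (d.choose k : ℂ) * cfall ((s:ℂ)+1) k * cfall (M-1) k / (cfall a k * cfall b k))
      - (a-d-s)*(b-d-s)*((-1)^k * (d.choose k : ℂ) * cfall (s:ℂ) k * cfall M k / (cfall a k * cfall b k)))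
     = (-1)^m * (M-s-1) * ((d:ℂ)-m) * d.choose m * cfall (s:ℂ) m * cfall (M-1) m / (cfall a m * cfall b m) := by
  induction m with
  | zero =>
    simp [cfall]; rw [hM]; ring
  | succ m ih =>
    rw [Finset.sum_range_succ, ih (by omega)]
    have ha1 := cfall_ne_of_le hm ha
    have hb1 := cfall_ne_of_le hm hb
    have e1 := cfall_succ_left ((s:ℂ)+1) m
    have e2 := cfall_succ_left M m
    rw [add_sub_cancel_right] at e1
    rw [cfall_succ'] at ha1 hb1
    rw [e1, e2, cfall_succ' (M-1), cfall_succ' (s:ℂ), cfall_succ' a, cfall_succ' b]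
    have hA := left_ne_zero_of_mul ha1
    have hA' := right_ne_zero_of_mul ha1
    have hB := left_ne_zero_of_mul hb1
    have hB' := right_ne_zero_of_mul hb1
    have hc := choose_succ_c d m
    have hc' : (-1)^m * (M-s-1) * ((d:ℂ)-m) * d.choose m * cfall (s:ℂ) m * cfall (M-1) m / (cfall a m * cfall b m) = (-1)^m * (M-s-1) * ((m+1) * d.choose (m+1)) * cfall (s:ℂ) m * cfall (M-1) m / (cfall a m * cfall b m) := by
      congr 1
      linear_combination (-(-1)^m * (M-s-1) * cfall (s:ℂ) m * cfall (M-1) m) * hc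
    rw [hc']
    field_simp
    rw [hM]
    push_cast
    ring

lemma ps (d s : ℕ) (a b M : ℂ) (hM : M = a + b - d - s + 1)
    (ha : cfall a d ≠ 0) (hb : cfall b d ≠ 0) :
    cfall a s * cfall b s * ∑ k ∈ Finset.range (d+1),
      (-1)^k * (d.choose k : ℂ) * cfall (s:ℂ) k * cfall M k / (cfall a k * cfall b k)
    = cfall (a-d) s * cfall (b-d) s := by
  induction s generalizing M with
  | zero =>
    rw [Finset.sum_eq_single 0]
    · simp [cfall]
    · intro k _ hk
      rw [cfall_nat_zero (Nat.pos_of_ne_zero hk)]; simp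
    · simp
  | succ s ih =>
    have h := ps_step d s a b (M+1) (by rw [hM]; push_cast; ring) d le_rfl ha hb
    have ih' := ih (M+1) (by rw [hM]; push_cast; ring)
    rw [Finset.sum_sub_distrib, ← Finset.mul_sum, ← Finset.mul_sum, add_sub_cancel_right] at h
    simp only [sub_self, mul_zero, zero_mul, zero_div] at h
    rw [cfall_succ', cfall_succ', cfall_succ', cfall_succ']
    push_cast
    linear_combination (cfall a s * cfall b s) * h + (a-d-s)*(b-d-s) * ih'

noncomputable def Hh (a b M : ℂ) (s t : ℕ) : ℂ :=
  ∑ j ∈ Finset.range (s+1), (-1)^j * (t.choose j : ℂ) * cfall (s:ℂ) j * cfall M j / (cfall a j * cfall b j)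

lemma Hh_transform (d s u : ℕ) (a b M : ℂ) (hM : M = a + b - d - s + 1)
    (ha : cfall a (d+s) ≠ 0) (hb : cfall b (d+s) ≠ 0) :
    cfall a s * cfall b s * Hh a b M s (u+d)
      = cfall (a-d) s * cfall (b-d) s * Hh (a-d) (b-d) M s u := by
  have key : Hh a b M s (u+d) = ∑ i ∈ Finset.range (s+1), ∑ k ∈ Finset.range (s-i+1),
      (-1)^(i+k) * ((u.choose i : ℂ) * (d.choose k : ℂ)) * cfall (s:ℂ) (i+k) * cfall M (i+k) / (cfall a (i+k) * cfall b (i+k)) := by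
    unfold Hh
    have : ∀ j ∈ Finset.range (s+1), (-1)^j * ((u+d).choose j : ℂ) * cfall (s:ℂ) j * cfall M j / (cfall a j * cfall b j)
       = ∑ i ∈ Finset.range (j+1), (-1)^j * ((u.choose i : ℂ) * (d.choose (j-i) : ℂ)) * cfall (s:ℂ) j * cfall M j / (cfall a j * cfall b j) := by
      intro j _
      rw [Nat.add_choose_eq, Finset.Nat.sum_antidiagonal_eq_sum_range_succ_mk]
      push_cast
      rw [Finset.mul_sum, Finset.sum_mul, Finset.sum_mul, Finset.sum_div]
    rw [Finset.sum_congr rfl this, Finset.sum_sigma', Finset.sum_sigma']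
    refine Finset.sum_bij' (fun x _ => ⟨x.2, x.1 - x.2⟩) (fun x _ => ⟨x.1 + x.2, x.1⟩) ?_ ?_ ?_ ?_ ?_
    · rintro ⟨x, y⟩ h; simp at h ⊢; omega
    · rintro ⟨x, y⟩ h; simp at h ⊢; omega
    · rintro ⟨x, y⟩ h; simp at h ⊢; omega
    · rintro ⟨x, y⟩ h; simp at h ⊢
    · rintro ⟨x, y⟩ h; simp at h ⊢
      have : y + (x - y) = x := by omega
      rw [this]
  rw [key]
  unfold Hh
  rw [Finset.mul_sum, Finset.mul_sum]
  apply Finset.sum_congr rfl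
  intro i hi
  have his : i ≤ s := by simp at hi; omega
  obtain ⟨l, rfl⟩ := Nat.exists_eq_add_of_le his
  rw [Nat.add_sub_cancel_left]
  have ha2 : cfall (a-i) (d+l) ≠ 0 := by
    rw [show d + (i+l) = i + (d+l) by ring, cfall_add'] at ha
    exact right_ne_zero_of_mul ha
  have hb2 : cfall (b-i) (d+l) ≠ 0 := by
    rw [show d + (i+l) = i + (d+l) by ring, cfall_add'] at hb
    exact right_ne_zero_of_mul hb
  have hP := ps d l (a-i) (b-i) (M-i) (by rw [hM]; push_cast; ring)
    (cfall_ne_of_le (by omega) ha2) (cfall_ne_of_le (by omega) hb2)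
  have hai := cfall_ne_of_le (show i ≤ d+(i+l) by omega) ha
  have hbi := cfall_ne_of_le (show i ≤ d+(i+l) by omega) hb
  have hadi : cfall (a-d) i ≠ 0 := by
    rw [cfall_add'] at ha
    exact cfall_ne_of_le (by omega) (right_ne_zero_of_mul ha)
  have hbdi : cfall (b-d) i ≠ 0 := by
    rw [cfall_add'] at hb
    exact cfall_ne_of_le (by omega) (right_ne_zero_of_mul hb)
  have hrange : ∑ k ∈ Finset.range (d+1),
      (-1)^k * (d.choose k : ℂ) * cfall (l:ℂ) k * cfall (M-i) k / (cfall (a-i) k * cfall (b-i) k)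
     = ∑ k ∈ Finset.range (l+1),
      (-1)^k * (d.choose k : ℂ) * cfall (l:ℂ) k * cfall (M-i) k / (cfall (a-i) k * cfall (b-i) k) := by
    rcases le_total d l with h | h
    · apply Finset.sum_subset
      · intro x; simp; omega
      · intro x _ hx
        rw [Nat.choose_eq_zero_of_lt (by simp at hx; omega)]; simp
    · symm
      apply Finset.sum_subset
      · intro x; simp; omega
      · intro x _ hx
        rw [cfall_nat_zero (by simp at hx; omega)]; simp
  rw [hrange] at hP
  have hterm : ∑ k ∈ Finset.range (l+1),
      (-1)^(i+k) * ((u.choose i : ℂ) * (d.choose k : ℂ)) * cfall ((i+l : ℕ):ℂ) (i+k) * cfall M (i+k) / (cfall a (i+k) * cfall b (i+k))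
    = (-1)^i * (u.choose i : ℂ) * cfall ((i+l : ℕ):ℂ) i * cfall M i / (cfall a i * cfall b i) *
      ∑ k ∈ Finset.range (l+1),
      (-1)^k * (d.choose k : ℂ) * cfall (l:ℂ) k * cfall (M-i) k / (cfall (a-i) k * cfall (b-i) k) := by
    rw [Finset.mul_sum]
    apply Finset.sum_congr rfl
    intro k _
    rw [cfall_add' _ i k, cfall_add' _ i k, cfall_add' _ i k, cfall_add' _ i k]
    have : ((i+l:ℕ):ℂ) - i = l := by push_cast; ring
    rw [this, pow_add]
    rw [div_mul_div_comm]
    congr 1 <;> ring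
  rw [hterm, cfall_add' a, cfall_add' b, cfall_add' (a-d), cfall_add' (b-d)]
  have e1 : a - d - i = a - i - d := by ring
  have e2 : b - d - i = b - i - d := by ring
  rw [e1, e2]
  field_simp
  linear_combination (u.choose i : ℂ) * cfall ((i+l : ℕ):ℂ) i * cfall M i * hP

lemma tele_step (q : ℕ) (M : ℂ) (hM : cfall M (2*(q+1)+1) ≠ 0) (l : ℕ) (hl : l ≤ q+1) :
    ∑ i ∈ Finset.range (l+1), (-1)^i * ((q+1).choose i : ℂ) * (M - 2*i) / cfall (M-i) (q+2)
      = (-1)^l * (q.choose l : ℂ) / cfall (M-l-1) (q+1) := by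
  have hne : ∀ i k : ℕ, i + k ≤ 2*(q+1)+1 → cfall (M-i) k ≠ 0 := by
    intro i k h
    have := cfall_ne_of_le h hM
    rw [cfall_add'] at this
    exact right_ne_zero_of_mul this
  induction l with
  | zero =>
    have h0 := hne 0 (q+2) (by omega)
    simp only [Nat.cast_zero, sub_zero] at h0
    simp
    rw [cfall_succ_left] at h0 ⊢
    have := left_ne_zero_of_mul h0
    have := right_ne_zero_of_mul h0
    field_simp
  | succ l ih =>
    rw [Finset.sum_range_succ, ih (by omega)]
    have h0 := hne (l+1) (q+2) (by omega)
    have e : M - ((l+1:ℕ):ℂ) = M - l - 1 := by push_cast; ring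
    rw [e] at h0 ⊢
    have h1 := h0
    have f1 := cfall_succ' (M-l-1) (q+1)
    have f2 := cfall_succ_left (M-l-1) (q+1)
    rw [show q+1+1 = q+2 from rfl] at f1 f2
    rw [f1] at h0
    rw [f2] at h1
    have g1 := left_ne_zero_of_mul h0
    have g2 := right_ne_zero_of_mul h0
    have g3 := left_ne_zero_of_mul h1
    have g4 := right_ne_zero_of_mul h1
    have p1 : ((q+1).choose (l+1) : ℂ) = q.choose l + q.choose (l+1) := by
      rw [Nat.choose_succ_succ]; push_cast; rfl
    have p2 := choose_succ_c q l
    have r1 : 1 / cfall (M-l-1) (q+1) = (M-l-1-(q+1:ℕ)) / cfall (M-l-1) (q+2) := by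
      rw [f1]; field_simp
    have r2 : 1 / cfall (M-l-1-1) (q+1) = (M-l-1) / cfall (M-l-1) (q+2) := by
      rw [f2]; field_simp
    rw [div_eq_mul_one_div _ (cfall (M-l-1) (q+1)), div_eq_mul_one_div _ (cfall (M-l-1-1) (q+1)), r1, r2, p1]
    push_cast
    rw [mul_div_assoc', mul_div_assoc', ← add_div]
    congr 1
    rw [pow_succ]
    linear_combination ((-1)^l) * p2

lemma tele (p : ℕ) (hp : 0 < p) (M : ℂ) (hM : cfall M (2*p+1) ≠ 0) :
    ∑ i ∈ Finset.range (p+1), (-1)^i * (p.choose i : ℂ) * (M - 2*i) / cfall (M-i) (p+1) = 0 := by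
  obtain ⟨q, rfl⟩ : ∃ q, p = q+1 := ⟨p-1, by omega⟩
  have := tele_step q M hM (q+1) le_rfl
  rw [Nat.choose_eq_zero_of_lt (show q < q+1 by omega)] at this
  simpa using this

lemma inner_sum_hahn (n j m : ℕ) (hjm : j ≤ m) (hm : 2*m ≤ n) :
    ∑ s ∈ Finset.range (m+1), (-1)^(m+s) * (m.choose s : ℂ) * cfall (s:ℂ) j * ((n:ℂ)+1-2*s) *
      cfall ((n:ℂ)-s+1) j / cfall ((n:ℂ)-s+1) (m+1) = if m = j then (j.factorial : ℂ) else 0 := by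
  obtain ⟨p, rfl⟩ := Nat.exists_eq_add_of_le hjm
  rw [add_assoc, Finset.sum_range_add]
  rw [Finset.sum_eq_zero (s := Finset.range j), zero_add]
  swap
  · intro s hs
    rw [cfall_nat_zero (by simpa using hs)]; simp
  have hnat : ((n - 2*j + 1 : ℕ) : ℂ) = (n:ℂ) - 2*j + 1 := by
    push_cast [Nat.cast_sub (show 2*j ≤ n by omega)]; ring
  have hT : ∀ i ∈ Finset.range (p+1), (-1)^(j+p+(j+i)) * ((j+p).choose (j+i) : ℂ) * cfall ((j+i:ℕ):ℂ) j * ((n:ℂ)+1-2*(j+i:ℕ)) *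
      cfall ((n:ℂ)-(j+i:ℕ)+1) j / cfall ((n:ℂ)-(j+i:ℕ)+1) (j+(p+1))
      = (-1)^p * cfall ((j+p:ℕ):ℂ) j * ((-1)^i * (p.choose i : ℂ) * (((n:ℂ)-2*j+1) - 2*i) / cfall (((n:ℂ)-2*j+1)-i) (p+1)) := by
    intro i hi
    have hip : i ≤ p := by simp at hi; omega
    have hz : (n:ℂ)-(j+i:ℕ)+1 = ((n-(j+i)+1:ℕ):ℂ) := by
      push_cast [Nat.cast_sub (show j+i ≤ n by omega)]; ring
    have hne : cfall ((n:ℂ)-(j+i:ℕ)+1) (j+(p+1)) ≠ 0 := by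
      rw [hz]; exact cfall_nat_ne (by omega)
    rw [cfall_add'] at hne ⊢
    have g1 := left_ne_zero_of_mul hne
    have g2 := right_ne_zero_of_mul hne
    have e : (n:ℂ)-(j+i:ℕ)+1 - j = ((n:ℂ)-2*j+1)-i := by push_cast; ring
    rw [e] at g2 ⊢
    have hch : ((j+p).choose (j+i) : ℂ) * cfall ((j+i:ℕ):ℂ) j = cfall ((j+p:ℕ):ℂ) j * p.choose i := by
      rw [cfall_nat, cfall_nat]
      have := Nat.choose_mul (n := j+p) (k := j+i) (s := j) (by omega)
      simp only [Nat.add_sub_cancel_left] at this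
      have h2 := congrArg (Nat.cast : ℕ → ℂ) this
      push_cast at h2
      linear_combination (j.factorial : ℂ) * h2
    have hs : (-1:ℂ)^(j+p+(j+i)) = (-1)^p * (-1)^i := by
      rw [show j+p+(j+i) = 2*j + (p+i) by ring, pow_add, pow_mul, pow_add]; simp
    rw [hs]
    field_simp
    push_cast at hch ⊢
    linear_combination ((n:ℂ)+1-2*(j+i)) * hch
  rw [Finset.sum_congr rfl hT, ← Finset.mul_sum]
  rcases Nat.eq_zero_or_pos p with rfl | hp
  · simp [cfall_nat]
    have : (n:ℂ)-2*j+1 ≠ 0 := by rw [← hnat]; exact Nat.cast_ne_zero.mpr (Nat.succ_ne_zero _)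
    simp [cfall, this]
  · rw [tele p hp, mul_zero, if_neg (by omega)]
    rw [← hnat]
    exact cfall_nat_ne (by omega)

noncomputable def Kk (n a b s : ℕ) : ℂ :=
  ∑ m ∈ Finset.range (min a b + 1), (m.choose s : ℂ) / m.factorial * (-1)^(m+s) * 2^m *
    cfall (a:ℂ) m * cfall (b:ℂ) m * ((n:ℂ)+1-2*s) / cfall ((n:ℂ)-s+1) (m+1)

lemma coef_sum (n a b j : ℕ) (hab : a + b ≤ n) (hj : j ≤ min a b) :
    ∑ s ∈ Finset.range (min a b + 1), Kk n a b s * ((-1)^j * cfall (s:ℂ) j * cfall ((n:ℂ)-s+1) j / (cfall (a:ℂ) j * cfall (b:ℂ) j)) = (-2)^j := by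
  unfold Kk
  simp_rw [Finset.sum_mul]
  rw [Finset.sum_comm]
  have hT : ∀ m ∈ Finset.range (min a b + 1),
      ∑ s ∈ Finset.range (min a b + 1), (m.choose s : ℂ) / m.factorial * (-1)^(m+s) * 2^m *
    cfall (a:ℂ) m * cfall (b:ℂ) m * ((n:ℂ)+1-2*s) / cfall ((n:ℂ)-s+1) (m+1) * ((-1)^j * cfall (s:ℂ) j * cfall ((n:ℂ)-s+1) j / (cfall (a:ℂ) j * cfall (b:ℂ) j))
    = if m = j then (-2)^j else 0 := by
    intro m hm
    have hmN : m ≤ min a b := by simp only [Finset.mem_range] at hm; omega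
    have hre : ∀ s ∈ Finset.range (min a b + 1), (m.choose s : ℂ) / m.factorial * (-1)^(m+s) * 2^m *
    cfall (a:ℂ) m * cfall (b:ℂ) m * ((n:ℂ)+1-2*s) / cfall ((n:ℂ)-s+1) (m+1) * ((-1)^j * cfall (s:ℂ) j * cfall ((n:ℂ)-s+1) j / (cfall (a:ℂ) j * cfall (b:ℂ) j))
     = (2^m * (-1)^j * cfall (a:ℂ) m * cfall (b:ℂ) m / (m.factorial * (cfall (a:ℂ) j * cfall (b:ℂ) j))) * ((-1)^(m+s) * (m.choose s : ℂ) * cfall (s:ℂ) j * ((n:ℂ)+1-2*s) *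
      cfall ((n:ℂ)-s+1) j / cfall ((n:ℂ)-s+1) (m+1)) := by
      intro s _
      simp only [div_eq_mul_inv, mul_inv]
      ring
    rw [Finset.sum_congr rfl hre, ← Finset.mul_sum]
    have hsub : ∑ s ∈ Finset.range (min a b + 1), (-1)^(m+s) * (m.choose s : ℂ) * cfall (s:ℂ) j * ((n:ℂ)+1-2*s) *
      cfall ((n:ℂ)-s+1) j / cfall ((n:ℂ)-s+1) (m+1) = ∑ s ∈ Finset.range (m + 1), (-1)^(m+s) * (m.choose s : ℂ) * cfall (s:ℂ) j * ((n:ℂ)+1-2*s) *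
      cfall ((n:ℂ)-s+1) j / cfall ((n:ℂ)-s+1) (m+1) := by
      symm
      apply Finset.sum_subset
      · intro x; simp only [Finset.mem_range]; omega
      · intro s _ hs
        rw [Nat.choose_eq_zero_of_lt (by simp at hs; omega)]; simp
    rw [hsub]
    rcases le_or_gt j m with hjm | hjm
    · rw [inner_sum_hahn n j m hjm (by omega)]
      split_ifs with h
      · subst h
        have h1 : cfall (a:ℂ) m ≠ 0 := cfall_nat_ne (by omega)
        have h2 : cfall (b:ℂ) m ≠ 0 := cfall_nat_ne (by omega)
        have h3 : (m.factorial : ℂ) ≠ 0 := by exact_mod_cast Nat.factorial_ne_zero m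
        rw [show (-2:ℂ) = 2 * (-1) by ring, mul_pow]
        field_simp
      · simp
    · rw [if_neg (by omega), Finset.sum_eq_zero, mul_zero]
      intro s hs
      rw [cfall_nat_zero (show s < j by simp at hs; omega)]; simp
  rw [Finset.sum_congr rfl hT]
  rw [Finset.sum_ite_eq' , if_pos (by simp only [Finset.mem_range]; omega)]

lemma core (n a b t : ℕ) (hab : a + b ≤ n) (ht : t ≤ min a b) :
    ∑ s ∈ Finset.range (min a b + 1), Kk n a b s * Hh a b ((n:ℂ)-s+1) s t = (-1)^t := by
  have h1 : ∀ s ∈ Finset.range (min a b + 1), Kk n a b s * Hh a b ((n:ℂ)-s+1) s t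
      = ∑ j ∈ Finset.range (min a b + 1), (t.choose j : ℂ) * (Kk n a b s * ((-1)^j * cfall (s:ℂ) j * cfall ((n:ℂ)-s+1) j / (cfall (a:ℂ) j * cfall (b:ℂ) j))) := by
    intro s hs
    unfold Hh
    rw [Finset.mul_sum]
    have : ∀ j, Kk n a b s * ((-1)^j * (t.choose j : ℂ) * cfall (s:ℂ) j * cfall ((n:ℂ)-s+1) j / (cfall (a:ℂ) j * cfall (b:ℂ) j)) = (t.choose j : ℂ) * (Kk n a b s * ((-1)^j * cfall (s:ℂ) j * cfall ((n:ℂ)-s+1) j / (cfall (a:ℂ) j * cfall (b:ℂ) j))) := by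
      intro j; ring
    simp_rw [this]
    apply Finset.sum_subset
    · intro x; simp only [Finset.mem_range] at hs ⊢; omega
    · intro j _ hj
      rw [cfall_nat_zero (show s < j by simp at hj; omega)]; simp
  rw [Finset.sum_congr rfl h1, Finset.sum_comm]
  simp_rw [← Finset.mul_sum]
  have h2 : ∀ j ∈ Finset.range (min a b + 1), (t.choose j : ℂ) * ∑ s ∈ Finset.range (min a b + 1), (Kk n a b s * ((-1)^j * cfall (s:ℂ) j * cfall ((n:ℂ)-s+1) j / (cfall (a:ℂ) j * cfall (b:ℂ) j))) = (-2)^j * (t.choose j : ℂ) := by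
    intro j hj
    rw [coef_sum n a b j hab (by simp only [Finset.mem_range] at hj; omega), mul_comm]
  rw [Finset.sum_congr rfl h2]
  have h3 : ∑ j ∈ Finset.range (t + 1), (-2:ℂ)^j * (t.choose j : ℂ) = ∑ j ∈ Finset.range (min a b + 1), (-2:ℂ)^j * (t.choose j : ℂ) := by
    apply Finset.sum_subset
    · intro x; simp only [Finset.mem_range]; omega
    · intro s _ hs
      rw [Nat.choose_eq_zero_of_lt (by simp at hs; omega)]; simp
  rw [← h3]
  have := add_pow (-2:ℂ) 1 t
  simp only [one_pow, mul_one] at this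
  rw [← this]; norm_num

open Polynomial in
lemma coeff_one_sub_pow (k j : ℕ) : ((1 - X : ℂ[X])^k).coeff j = (-1)^j * (k.choose j : ℂ) := by
  have h : (1 - X : ℂ[X])^k = ((1 + X : ℂ[X])^k).comp (C (-1) * X) := by
    simp [sub_eq_add_neg]
  rw [h, comp_C_mul_X_coeff, coeff_one_add_X_pow]
  ring

open Polynomial in
lemma kraw_coeff (m k N : ℕ) : kraw m k N = ((1 - X : ℂ[X])^k * (1 + X)^(N-k)).coeff m := by
  rw [coeff_mul, Finset.Nat.sum_antidiagonal_eq_sum_range_succ_mk]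
  unfold kraw
  apply Finset.sum_congr rfl
  intro j _
  simp only [coeff_one_sub_pow, coeff_one_add_X_pow]

open Polynomial in
lemma kraw_one (m k N : ℕ) (hk : k ≤ N) :
    kraw m k N = (-1)^k * ∑ i ∈ Finset.range (k+1), (-2)^i * (k.choose i : ℂ) * ((N-i).choose m : ℂ) := by
  rw [kraw_coeff]
  have h : (1 - X : ℂ[X]) = C 2 + (C (-1)) * (1 + X) := by
    have : (C 2 : ℂ[X]) = 1 + 1 := by rw [show (2:ℂ) = 1 + 1 by norm_num]; simp only [map_add, map_one]
    rw [this]; simp only [map_neg, map_one]; ring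
  have h2 : (1 - X : ℂ[X])^k * (1 + X)^(N-k) = ∑ i ∈ Finset.range (k+1), C ((-1)^k * ((-2)^i * (k.choose i : ℂ))) * (1+X)^(N-i) := by
    rw [h, add_pow, Finset.sum_mul]
    apply Finset.sum_congr rfl
    intro i hi
    have hik : i ≤ k := by simp at hi; omega
    have e : N - i = (k - i) + (N-k) := by omega
    have e2 : (-1:ℂ)^k * ((-2)^i * (k.choose i : ℂ)) = 2^i * (-1)^(k-i) * (k.choose i : ℂ) := by
      obtain ⟨l, rfl⟩ := Nat.exists_eq_add_of_le hik
      rw [Nat.add_sub_cancel_left, pow_add, show (-2:ℂ) = (-1) * 2 by ring, mul_pow]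
      have : (-1:ℂ)^i * (-1)^i = 1 := by rw [← mul_pow]; simp
      linear_combination (2^i * (-1)^l * ((i+l).choose i : ℂ)) * this
    rw [e2, e, pow_add, mul_pow]
    simp only [map_mul, map_pow, map_natCast]
    ring
  rw [h2, finsetSum_coeff, Finset.mul_sum]
  apply Finset.sum_congr rfl
  intro i _
  rw [coeff_C_mul, coeff_one_add_X_pow]
  ring

open Polynomial in
lemma kraw_two (m k N : ℕ) (hk : k ≤ N) :
    kraw m k N = ∑ i ∈ Finset.range (N-k+1), 2^i * ((N-k).choose i : ℂ) *
      (if i ≤ m then (-1)^(m-i) * ((N-i).choose (m-i) : ℂ) else 0) := by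
  rw [kraw_coeff]
  have h : (1 + X : ℂ[X]) = C 2 * X + (1 - X) := by
    have : (C 2 : ℂ[X]) = 1 + 1 := by rw [show (2:ℂ) = 1 + 1 by norm_num]; simp only [map_add, map_one]
    rw [this]; ring
  have h2 : (1 - X : ℂ[X])^k * (1 + X)^(N-k) = ∑ i ∈ Finset.range (N-k+1), C (2^i * ((N-k).choose i : ℂ)) * ((1-X)^(N-i) * X^i) := by
    rw [h, add_pow, Finset.mul_sum]
    apply Finset.sum_congr rfl
    intro i hi
    have hik : i ≤ N-k := by simp at hi; omega
    have e : N - i = k + (N-k-i) := by omega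
    rw [e, pow_add, mul_pow]
    simp only [map_mul, map_pow, map_natCast]
    ring
  rw [h2, finsetSum_coeff]
  apply Finset.sum_congr rfl
  intro i _
  rw [coeff_C_mul, coeff_mul_X_pow']
  simp only [coeff_one_sub_pow]

lemma ch_ratio (N A i : ℕ) (hA : A ≤ N) (hi : i ≤ A) :
    ((N-i).choose (A-i) : ℂ) / N.choose A = cfall (A:ℂ) i / cfall (N:ℂ) i := by
  have h1 : (N.choose A : ℂ) ≠ 0 := by exact_mod_cast (Nat.choose_pos hA).ne'
  rw [div_eq_div_iff h1 (cfall_nat_ne (by omega)), cfall_nat, cfall_nat]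
  have := Nat.choose_mul (n := N) (k := A) (s := i) hi
  have h2 := congrArg (Nat.cast : ℕ → ℂ) this
  push_cast at h2
  linear_combination (-(i.factorial : ℂ)) * h2

lemma ch_fall (k i : ℕ) : (k.choose i : ℂ) = cfall (k:ℂ) i / i.factorial := by
  have h3 : (i.factorial : ℂ) ≠ 0 := by exact_mod_cast Nat.factorial_ne_zero i
  rw [cfall_nat]; field_simp

noncomputable def Ff (N A B : ℕ) : ℂ := ∑ i ∈ Finset.range (min A B + 1),
  (-2)^i * cfall (A:ℂ) i * cfall (B:ℂ) i / (cfall (N:ℂ) i * i.factorial)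

lemma kraw_ratio_one (m k N : ℕ) (hk : k ≤ N) (hm : m ≤ N) :
    kraw m k N / (N.choose m : ℂ) = (-1)^k * Ff N (N-m) k := by
  rw [kraw_one m k N hk, mul_div_assoc, Finset.sum_div]
  congr 1
  unfold Ff
  symm
  have : ∀ i ∈ Finset.range (min (N-m) k + 1), (-2)^i * cfall ((N-m:ℕ):ℂ) i * cfall (k:ℂ) i / (cfall (N:ℂ) i * i.factorial)
     = (-2)^i * (k.choose i : ℂ) * ((N-i).choose m : ℂ) / (N.choose m : ℂ) := by
    intro i hi
    simp only [Finset.mem_range] at hi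
    have h := ch_ratio N (N-m) i (by omega) (by omega)
    rw [Nat.choose_symm hm] at h
    have e : (N-i).choose (N-m-i) = (N-i).choose m := by
      rw [← Nat.choose_symm (show m ≤ N-i by omega)]; congr 1; omega
    rw [e] at h
    rw [mul_div_assoc _ (((N-i).choose m : ℕ):ℂ), h, ch_fall k i]
    simp only [div_eq_mul_inv, mul_inv]
    ring
  rw [Finset.sum_congr rfl this]
  apply Finset.sum_subset
  · intro x; simp only [Finset.mem_range]; omega
  · intro i hi hi2
    simp only [Finset.mem_range] at hi hi2
    rw [Nat.choose_eq_zero_of_lt (show N - i < m by omega)]; simp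

lemma kraw_ratio_two (m k N : ℕ) (hk : k ≤ N) (hm : m ≤ N) :
    kraw m k N / (N.choose m : ℂ) = (-1)^m * Ff N (N-k) m := by
  rw [kraw_two m k N hk, Finset.sum_div]
  unfold Ff
  symm
  rw [Finset.mul_sum]
  have : ∀ i ∈ Finset.range (min (N-k) m + 1), (-1)^m * ((-2)^i * cfall ((N-k:ℕ):ℂ) i * cfall (m:ℂ) i / (cfall (N:ℂ) i * i.factorial))
     = 2^i * ((N-k).choose i : ℂ) *
      (if i ≤ m then (-1)^(m-i) * ((N-i).choose (m-i) : ℂ) else 0) / (N.choose m : ℂ) := by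
    intro i hi
    simp only [Finset.mem_range] at hi
    have him : i ≤ m := by omega
    have h := ch_ratio N m i (by omega) (by omega)
    rw [if_pos him, mul_div_assoc (2^i * ((N-k).choose i : ℂ)), mul_div_assoc _ (((N-i).choose (m-i) : ℕ):ℂ), h, ch_fall (N-k) i]
    have hs : (-1:ℂ)^m * (-2)^i = 2^i * (-1)^(m-i) := by
      obtain ⟨l, rfl⟩ := Nat.exists_eq_add_of_le him
      rw [Nat.add_sub_cancel_left, pow_add, show (-2:ℂ) = (-1) * 2 by ring, mul_pow]
      have : (-1:ℂ)^i * (-1)^i = 1 := by rw [← mul_pow]; simp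
      linear_combination (2^i * (-1)^l) * this
    simp only [div_eq_mul_inv, mul_inv]
    linear_combination (cfall ((N-k:ℕ):ℂ) i * cfall (m:ℂ) i * ((cfall (N:ℂ) i)⁻¹ * (i.factorial:ℂ)⁻¹)) * hs
  rw [Finset.sum_congr rfl this]
  apply Finset.sum_subset
  · intro x; simp only [Finset.mem_range]; omega
  · intro i hi hi2
    simp only [Finset.mem_range] at hi hi2
    rw [if_neg (by omega)]; simp

lemma Kk_form (n a b s : ℕ) (hab : a + b ≤ n) (hs : s ≤ min a b) :
    Kk n a b s = 2^s * cfall (a:ℂ) s * cfall (b:ℂ) s / (s.factorial * cfall ((n:ℂ)-s+1) s) * Ff (n-2*s) (a-s) (b-s) := by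
  unfold Kk Ff
  have e : min a b + 1 = s + (min (a-s) (b-s) + 1) := by omega
  rw [e, Finset.sum_range_add, Finset.sum_eq_zero (s := Finset.range s), zero_add, Finset.mul_sum]
  swap
  · intro m hm
    rw [Nat.choose_eq_zero_of_lt (by simpa using hm)]; simp
  apply Finset.sum_congr rfl
  intro i hi
  simp only [Finset.mem_range] at hi
  have c1 : ((a-s:ℕ):ℂ) = (a:ℂ) - s := Nat.cast_sub (by omega)
  have c2 : ((b-s:ℕ):ℂ) = (b:ℂ) - s := Nat.cast_sub (by omega)
  have c3 : ((n-2*s:ℕ):ℂ) = (n:ℂ) - 2*s := by rw [Nat.cast_sub (by omega)]; push_cast; rfl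
  have c4 : ((n-2*s+1:ℕ):ℂ) = (n:ℂ)+1-2*s := by rw [Nat.cast_add, c3]; push_cast; ring
  have c5 : ((n-s+1:ℕ):ℂ) = (n:ℂ)-s+1 := by push_cast [Nat.cast_sub (show s ≤ n by omega)]; ring
  have n1 : cfall ((n:ℂ)-s+1) s ≠ 0 := by rw [← c5]; exact cfall_nat_ne (by omega)
  have n2 : (n:ℂ)+1-2*s ≠ 0 := by rw [← c4]; exact Nat.cast_ne_zero.mpr (Nat.succ_ne_zero _)
  have n3 : cfall ((n-2*s:ℕ):ℂ) i ≠ 0 := cfall_nat_ne (by omega)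
  have hd : cfall ((n:ℂ)-s+1) (s+i+1) = cfall ((n:ℂ)-s+1) s * (((n:ℂ)+1-2*s) * cfall ((n-2*s:ℕ):ℂ) i) := by
    rw [add_assoc, cfall_add', cfall_succ_left, c3]
    congr 2
    · ring
    · congr 1; ring
  have f1 : (s.factorial : ℂ) ≠ 0 := by exact_mod_cast Nat.factorial_ne_zero s
  have f2 : (i.factorial : ℂ) ≠ 0 := by exact_mod_cast Nat.factorial_ne_zero i
  have f3 : ((s+i).factorial : ℂ) ≠ 0 := by exact_mod_cast Nat.factorial_ne_zero _
  have hch : ((s+i).choose s : ℂ) / (s+i).factorial = 1 / (s.factorial * i.factorial) := by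
    have := Nat.add_choose_mul_factorial_mul_factorial s i
    rw [Nat.choose_symm_add.symm] at this
    have h2 := congrArg (Nat.cast : ℕ → ℂ) this
    push_cast at h2
    rw [div_eq_div_iff f3 (mul_ne_zero f1 f2)]
    linear_combination h2
  have hsg : (-1:ℂ)^(s+i+s) = (-1)^i := by
    rw [show s+i+s = 2*s + i by ring, pow_add, pow_mul]; simp
  rw [hch, hd, hsg, cfall_add' (a:ℂ), cfall_add' (b:ℂ), ← c1, ← c2, pow_add, show (-2:ℂ) = (-1)*2 by ring, mul_pow]
  field_simp

lemma sgn_aux (r s : ℕ) (h : s ≤ r) : (-2:ℂ)^s * (-1)^(r-s) = (-1)^r * 2^s := by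
  obtain ⟨l, rfl⟩ := Nat.exists_eq_add_of_le h
  rw [Nat.add_sub_cancel_left, show (-2:ℂ) = (-1) * 2 by ring, mul_pow, pow_add]
  ring

lemma kap_one (n r1 r2 s : ℕ) (h1 : r1 ≤ n) (h2 : r2 ≤ n) (h3 : r2 ≤ r1)
    (hs : s ≤ min (n-r1) r2) :
    kapCoef n r1 r2 s = (-1)^r2 * Kk n (n-r1) r2 s := by
  have hr := kraw_ratio_one (r1-s) (r2-s) (n-2*s) (by omega) (by omega)
  rw [show n - 2*s - (r1-s) = n - r1 - s by omega] at hr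
  rw [Kk_form n (n-r1) r2 s (by omega) hs, Nat.cast_sub h1]
  have hsg := sgn_aux r2 s (by omega)
  unfold kapCoef
  rw [← div_div, mul_div_right_comm, mul_div_assoc, hr]
  simp only [div_eq_mul_inv]
  linear_combination (cfall ((n:ℂ)-r1) s * cfall (r2:ℂ) s * ((s.factorial:ℂ) * cfall ((n:ℂ)-s+1) s)⁻¹ * Ff (n-2*s) (n-r1-s) (r2-s)) * hsg

lemma kap_two (n r1 r2 s : ℕ) (h1 : r1 ≤ n) (h2 : r2 ≤ n) (h3 : r1 ≤ r2)
    (hs : s ≤ min (n-r2) r1) :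
    kapCoef n r1 r2 s * (cfall ((n:ℂ)-r2) s * cfall (r1:ℂ) s)
      = (-1)^r1 * Kk n (n-r2) r1 s * (cfall ((n:ℂ)-r1) s * cfall (r2:ℂ) s) := by
  have hr := kraw_ratio_two (r1-s) (r2-s) (n-2*s) (by omega) (by omega)
  rw [show n - 2*s - (r2-s) = n - r2 - s by omega] at hr
  rw [Kk_form n (n-r2) r1 s (by omega) hs, Nat.cast_sub h2]
  have hsg := sgn_aux r1 s (by omega)
  unfold kapCoef
  rw [← div_div, mul_div_right_comm, mul_div_assoc, hr]
  simp only [div_eq_mul_inv]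
  linear_combination (cfall ((n:ℂ)-r1) s * cfall (r2:ℂ) s * (cfall ((n:ℂ)-r2) s * cfall (r1:ℂ) s) * ((s.factorial:ℂ) * cfall ((n:ℂ)-s+1) s)⁻¹ * Ff (n-2*s) (n-r2-s) (r1-s)) * hsg

lemma hahn_Hh (n r1 r2 s t : ℕ) :
    hahn n r1 r2 s (t:ℂ) = Hh ((n:ℂ)-r1) r2 ((n:ℂ)-s+1) s t := by
  unfold hahn Hh
  apply Finset.sum_congr rfl
  intro j _
  rw [cbinom, ← ch_fall]

/-- Kernel form of the decomposition of the Fourier transform on the power set of `Ω`: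
for `x' ∈ X_{r1}`, `x ∈ X_{r2}`,
`(-1)^{|x ∩ x'|} = Σ_{s=0}^{N(r1,r2)} κ_s^{r1,r2} λ_s^{r1,r2}(|x \ x'|; n)`. -/
theorem stmt_18 {Ω : Type*} [Fintype Ω] [DecidableEq Ω] (n r1 r2 : ℕ)
    (hn : Fintype.card Ω = n) (h1 : r1 ≤ n) (h2 : r2 ≤ n)
    (x' x : Finset Ω) (hx' : x'.card = r1) (hx : x.card = r2) :
    ((-1 : ℂ) ^ ((x ∩ x').card)) =
      ∑ s ∈ Finset.range (min (min r1 (n - r1)) (min r2 (n - r2)) + 1),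
        kapCoef n r1 r2 s * hahn n r1 r2 s ((((x \ x').card : ℕ) : ℂ)) := by
  have hc1 := Finset.card_inter_add_card_sdiff x x'
  have hc2 := Finset.card_inter_add_card_sdiff x' x
  rw [Finset.inter_comm] at hc2
  have hu : (x ∪ x').card ≤ n := hn ▸ Finset.card_le_univ _
  have hu2 := Finset.card_union_add_card_inter x x'
  rcases le_total r2 r1 with h3 | h3
  · have hN : min (min r1 (n - r1)) (min r2 (n - r2)) = min (n-r1) r2 := by omega
    rw [hN]
    have hcore := core n (n-r1) r2 (x \ x').card (by omega) (by omega)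
    have : ∀ s ∈ Finset.range (min (n-r1) r2 + 1),
        kapCoef n r1 r2 s * hahn n r1 r2 s ((((x \ x').card : ℕ) : ℂ))
        = (-1)^r2 * (Kk n (n-r1) r2 s * Hh ((n-r1:ℕ):ℂ) r2 ((n:ℂ)-s+1) s (x \ x').card) := by
      intro s hs
      simp only [Finset.mem_range] at hs
      rw [hahn_Hh, kap_one n r1 r2 s h1 h2 h3 (by omega), Nat.cast_sub h1]
      ring
    rw [Finset.sum_congr rfl this, ← Finset.mul_sum, hcore, ← pow_add]
    rw [show r2 + (x \ x').card = (x ∩ x').card + 2 * (x \ x').card by omega, pow_add, pow_mul]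
    simp
  · have hN : min (min r1 (n - r1)) (min r2 (n - r2)) = min (n-r2) r1 := by omega
    rw [hN]
    have hcore := core n (n-r2) r1 (x' \ x).card (by omega) (by omega)
    obtain ⟨d, rfl⟩ := Nat.exists_eq_add_of_le h3
    have : ∀ s ∈ Finset.range (min (n-(r1+d)) r1 + 1),
        kapCoef n r1 (r1+d) s * hahn n r1 (r1+d) s ((((x \ x').card : ℕ) : ℂ))
        = (-1)^r1 * (Kk n (n-(r1+d)) r1 s * Hh ((n-(r1+d):ℕ):ℂ) r1 ((n:ℂ)-s+1) s (x' \ x).card) := by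
      intro s hs
      simp only [Finset.mem_range] at hs
      have c1 : (n:ℂ) - r1 = ((n-r1:ℕ):ℂ) := (Nat.cast_sub h1).symm
      have ha : cfall ((n:ℂ)-r1) (d+s) ≠ 0 := by
        rw [c1]; exact cfall_nat_ne (by omega)
      have hb : cfall ((r1+d:ℕ):ℂ) (d+s) ≠ 0 := cfall_nat_ne (by omega)
      have hT := Hh_transform d s (x' \ x).card ((n:ℂ)-r1) ((r1+d:ℕ):ℂ) ((n:ℂ)-s+1)
        (by push_cast; ring) ha hb
      rw [show (x' \ x).card + d = (x \ x').card by omega] at hT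
      have hk := kap_two n r1 (r1+d) s h1 h2 h3 (by omega)
      have ha' := cfall_ne_of_le (show s ≤ d+s by omega) ha
      have hb' := cfall_ne_of_le (show s ≤ d+s by omega) hb
      have e1 : (n:ℂ) - r1 - d = (n:ℂ) - (r1+d:ℕ) := by push_cast; ring
      have e2 : ((r1+d:ℕ):ℂ) - d = r1 := by push_cast; ring
      rw [e1, e2] at hT
      rw [hahn_Hh, Nat.cast_sub h2]
      apply mul_left_cancel₀ (mul_ne_zero ha' hb')
      linear_combination kapCoef n r1 (r1+d) s * hT + Hh ((n:ℂ)-(r1+d:ℕ)) r1 ((n:ℂ)-s+1) s (x' \ x).card * hk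
    rw [Finset.sum_congr rfl this, ← Finset.mul_sum, hcore, ← pow_add]
    rw [show r1 + (x' \ x).card = (x ∩ x').card + 2 * (x' \ x).card by omega, pow_add, pow_mul]
    simp
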